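/- Suppose R is positive definite, the pair (A,B) is stabilizable (i.e. there exists F ∈ ℝ^{m×n} such that A + BF is Schur stable), A − B R⁻¹ Sᵀ is nonsingular, and there exist matrices C ∈ ℝ^{q×n}, D ∈ ℝ^{q×m} with Q = CᵀC, S = CᵀD, R = DᵀD such that for every θ ∈ [0,2π] the complex block matrix [[A − e^{iθ}·I_n, B],[C, D]] (real entries viewed as complex) has full column rank n + m. Then there exists a unique stabilizing solution X of the DARE, and this X is positive semidefinite. -/

import Mathlib

open Matrix

/-- A real square matrix is Schur stable if its spectral radius (the maximum
modulus of its complex eigenvalues) is strictly less than 1. -/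
def SchurStable {n : ℕ} (M : Matrix (Fin n) (Fin n) ℝ) : Prop :=
  spectralRadius ℂ (M.map Complex.ofReal) < 1

/-- A symmetric matrix `X` with `R + BᵀXB` invertible solving the discrete-time
algebraic Riccati equation (DARE). -/
def IsDARESolution {n m : ℕ} (A : Matrix (Fin n) (Fin n) ℝ) (B : Matrix (Fin n) (Fin m) ℝ)
    (Q : Matrix (Fin n) (Fin n) ℝ) (S : Matrix (Fin n) (Fin m) ℝ)
    (R : Matrix (Fin m) (Fin m) ℝ) (X : Matrix (Fin n) (Fin n) ℝ) : Prop :=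
  X.IsSymm ∧ IsUnit (R + Bᵀ * X * B) ∧
    X = Aᵀ * X * A + Q - (Aᵀ * X * B + S) * (R + Bᵀ * X * B)⁻¹ * (Aᵀ * X * B + S)ᵀ

/-- The gain `K_X = (R + BᵀXB)⁻¹ (BᵀXA + Sᵀ)`. -/
noncomputable def gain {n m : ℕ} (A : Matrix (Fin n) (Fin n) ℝ) (B : Matrix (Fin n) (Fin m) ℝ)
    (S : Matrix (Fin n) (Fin m) ℝ) (R : Matrix (Fin m) (Fin m) ℝ)
    (X : Matrix (Fin n) (Fin n) ℝ) : Matrix (Fin m) (Fin n) ℝ :=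
  (R + Bᵀ * X * B)⁻¹ * (Bᵀ * X * A + Sᵀ)

/-- A stabilizing solution of the DARE: a solution for which `A - B K_X` is Schur stable. -/
def IsStabilizingSolution {n m : ℕ} (A : Matrix (Fin n) (Fin n) ℝ) (B : Matrix (Fin n) (Fin m) ℝ)
    (Q : Matrix (Fin n) (Fin n) ℝ) (S : Matrix (Fin n) (Fin m) ℝ)
    (R : Matrix (Fin m) (Fin m) ℝ) (X : Matrix (Fin n) (Fin n) ℝ) : Prop :=
  IsDARESolution A B Q S R X ∧ SchurStable (A - B * gain A B S R X)

open Filter Topology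

section helpers

theorem mem_spec_iff_det {n : ℕ} (M : Matrix (Fin n) (Fin n) ℂ) (z : ℂ) :
    z ∈ spectrum ℂ M ↔ (z • (1 : Matrix (Fin n) (Fin n) ℂ) - M).det = 0 := by
  rw [spectrum.mem_iff, Matrix.isUnit_iff_isUnit_det, isUnit_iff_ne_zero, not_not,
    Algebra.algebraMap_eq_smul_one]

theorem schur_iff {n : ℕ} (M : Matrix (Fin n) (Fin n) ℝ) :
    SchurStable M ↔ ∀ z ∈ spectrum ℂ (M.map Complex.ofReal), ‖z‖ < 1 := by
  unfold SchurStable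
  constructor
  · intro h z hz
    have h1 : (‖z‖₊ : ENNReal) ≤ spectralRadius ℂ (M.map Complex.ofReal) :=
      le_iSup₂ (f := fun (k : ℂ) (_ : k ∈ spectrum ℂ (M.map Complex.ofReal)) =>
        (‖k‖₊ : ENNReal)) z hz
    have h2 := lt_of_le_of_lt h1 h
    have h3 : ‖z‖₊ < 1 := by exact_mod_cast h2
    exact_mod_cast h3
  · intro h
    let _ : NormedRing (Matrix (Fin n) (Fin n) ℂ) := Matrix.linftyOpNormedRing
    let _ : NormedAlgebra ℂ (Matrix (Fin n) (Fin n) ℂ) := Matrix.linftyOpNormedAlgebra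
    rcases (spectrum ℂ (M.map Complex.ofReal)).eq_empty_or_nonempty with he | hne
    · unfold spectralRadius
      rw [he]
      simp
    · have : CompleteSpace (Matrix (Fin n) (Fin n) ℂ) := FiniteDimensional.complete ℂ _
      have := spectrum.spectralRadius_lt_of_forall_lt_of_nonempty (r := 1) hne
        (fun z hz => by exact_mod_cast h z hz)
      exact_mod_cast this

theorem cpow_tendsto {n : ℕ} (M : Matrix (Fin n) (Fin n) ℂ) (h : spectralRadius ℂ M < 1) :
    Tendsto (fun k : ℕ => M ^ k) atTop (𝓝 0) := by
  let _ : NormedRing (Matrix (Fin n) (Fin n) ℂ) := Matrix.linftyOpNormedRing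
  let _ : NormedAlgebra ℂ (Matrix (Fin n) (Fin n) ℂ) := Matrix.linftyOpNormedAlgebra
  have : CompleteSpace (Matrix (Fin n) (Fin n) ℂ) := FiniteDimensional.complete ℂ _
  have hg := spectrum.pow_nnnorm_pow_one_div_tendsto_nhds_spectralRadius M
  obtain ⟨r, hr1, hr2⟩ := exists_between h
  have hev := hg.eventually_lt_const hr1
  have hr0 : r ≠ ⊤ := (hr2.trans ENNReal.one_lt_top).ne
  lift r to NNReal using hr0
  have hr3 : r < 1 := by exact_mod_cast hr2
  have hb : ∀ᶠ k : ℕ in atTop, ‖M ^ k‖ ≤ (r : ℝ) ^ k := by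
    filter_upwards [hev, eventually_gt_atTop 0] with k hk hk0
    have hk0' : (k : ℝ) ≠ 0 := by positivity
    have h1 := ENNReal.rpow_le_rpow hk.le (z := (k : ℝ)) (by positivity)
    rw [← ENNReal.rpow_mul, one_div, inv_mul_cancel₀ hk0', ENNReal.rpow_one,
      ENNReal.rpow_natCast] at h1
    have h2 : ‖M ^ k‖₊ ≤ r ^ k := by exact_mod_cast h1
    exact_mod_cast h2
  have := squeeze_zero_norm' hb (tendsto_pow_atTop_nhds_zero_of_lt_one r.2 (by exact_mod_cast hr3))
  exact this

theorem schur_pow_tendsto {n : ℕ} (M : Matrix (Fin n) (Fin n) ℝ) (h : SchurStable M) :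
    Tendsto (fun k : ℕ => M ^ k) atTop (𝓝 0) := by
  have h1 := cpow_tendsto _ h
  have hc : Continuous (fun N : Matrix (Fin n) (Fin n) ℂ => N.map Complex.re) :=
    continuous_id.matrix_map Complex.continuous_re
  have h2 := (hc.tendsto 0).comp h1
  have e : ∀ k : ℕ, ((M.map Complex.ofReal) ^ k).map Complex.re = M ^ k := by
    intro k
    have : (M.map Complex.ofReal) ^ k = (M ^ k).map Complex.ofReal := by
      have := map_pow (Complex.ofRealHom.mapMatrix (m := Fin n)) M k
      exact this.symm
    rw [this]
    ext i j
    simp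
  have e0 : (0 : Matrix (Fin n) (Fin n) ℂ).map Complex.re = 0 := by ext i j; simp
  rw [e0] at h2
  refine h2.congr fun k => ?_
  exact e k

/-- Real form: every complex eigenvalue has modulus less than one. -/
theorem schur_of_pairs {n : ℕ} (M : Matrix (Fin n) (Fin n) ℝ)
    (h : ∀ (s t : ℝ) (a b : Fin n → ℝ), (a ≠ 0 ∨ b ≠ 0) → M *ᵥ a = s • a - t • b →
      M *ᵥ b = t • a + s • b → s ^ 2 + t ^ 2 < 1) : SchurStable M := by
  rw [schur_iff]
  intro z hz
  rw [mem_spec_iff_det, ← Matrix.exists_mulVec_eq_zero_iff] at hz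
  obtain ⟨v, hv, hz⟩ := hz
  rw [Matrix.sub_mulVec, sub_eq_zero, Matrix.smul_mulVec, Matrix.one_mulVec] at hz
  have hh := h z.re z.im (fun i => (v i).re) (fun i => (v i).im) ?_ ?_ ?_
  · rw [← sq_lt_one_iff₀ (norm_nonneg z), Complex.sq_norm, Complex.normSq_apply]
    linarith
  · by_contra hc
    push Not at hc
    apply hv
    funext i
    exact Complex.ext (congrFun hc.1 i) (congrFun hc.2 i)
  · funext i
    have := congrArg Complex.re (congrFun hz i)
    simp [Matrix.mulVec, dotProduct] at this ⊢
    exact this.symm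
  · funext i
    have := congrArg Complex.im (congrFun hz i)
    simp [Matrix.mulVec, dotProduct] at this ⊢
    rw [← this]
    ring

theorem pairs_of_schur {n : ℕ} (M : Matrix (Fin n) (Fin n) ℝ) (hM : SchurStable M)
    (s t : ℝ) (a b : Fin n → ℝ) (hab : a ≠ 0 ∨ b ≠ 0) (ha : M *ᵥ a = s • a - t • b)
    (hb : M *ᵥ b = t • a + s • b) : s ^ 2 + t ^ 2 < 1 := by
  rw [schur_iff] at hM
  have := hM ⟨s, t⟩ ?_
  · rw [← sq_lt_one_iff₀ (norm_nonneg _), Complex.sq_norm, Complex.normSq_apply] at this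
    simp only at this
    linarith
  · rw [mem_spec_iff_det, ← Matrix.exists_mulVec_eq_zero_iff]
    refine ⟨fun i => ⟨a i, b i⟩, ?_, ?_⟩
    · intro h0
      rcases hab with h | h
      · exact h (funext fun i => congrArg Complex.re (congrFun h0 i))
      · exact h (funext fun i => congrArg Complex.im (congrFun h0 i))
    · rw [Matrix.sub_mulVec, sub_eq_zero, Matrix.smul_mulVec, Matrix.one_mulVec]
      funext i
      have h1 := congrFun ha i
      have h2 := congrFun hb i
      simp [Matrix.mulVec, dotProduct] at h1 h2
      apply Complex.ext
      · simp [Matrix.mulVec, dotProduct, h1]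
      · simp [Matrix.mulVec, dotProduct, h2]
        ring

/-- A limit of Schur stable matrices has all eigenvalues in the closed disc. -/
theorem schur_limit {n : ℕ} (M : ℕ → Matrix (Fin n) (Fin n) ℝ) (N : Matrix (Fin n) (Fin n) ℝ)
    (hM : ∀ k, SchurStable (M k)) (hlim : Tendsto M atTop (𝓝 N))
    (s t : ℝ) (a b : Fin n → ℝ) (hab : a ≠ 0 ∨ b ≠ 0) (ha : N *ᵥ a = s • a - t • b)
    (hb : N *ᵥ b = t • a + s • b) : s ^ 2 + t ^ 2 ≤ 1 := by
  by_contra hcon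
  push Not at hcon
  set z : ℂ := ⟨s, t⟩ with hz
  have hz1 : 1 < ‖z‖ := by
    rw [← one_lt_sq_iff₀ (norm_nonneg _), Complex.sq_norm, Complex.normSq_apply]
    simp only [hz]
    linarith
  have hdet : (z • (1 : Matrix (Fin n) (Fin n) ℂ) - N.map Complex.ofReal).det = 0 := by
    rw [← Matrix.exists_mulVec_eq_zero_iff]
    refine ⟨fun i => ⟨a i, b i⟩, ?_, ?_⟩
    · intro h0
      rcases hab with h | h
      · exact h (funext fun i => congrArg Complex.re (congrFun h0 i))
      · exact h (funext fun i => congrArg Complex.im (congrFun h0 i))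
    · rw [Matrix.sub_mulVec, sub_eq_zero, Matrix.smul_mulVec, Matrix.one_mulVec]
      funext i
      have h1 := congrFun ha i
      have h2 := congrFun hb i
      simp [Matrix.mulVec, dotProduct] at h1 h2
      apply Complex.ext
      · simp [Matrix.mulVec, dotProduct, h1, hz]
      · simp [Matrix.mulVec, dotProduct, h2, hz]
        ring
  have hlow : ∀ k, (‖z‖ - 1) ^ n ≤
      ‖(z • (1 : Matrix (Fin n) (Fin n) ℂ) - (M k).map Complex.ofReal).det‖ := by
    intro k
    have hs := (schur_iff _).1 (hM k)
    set P := (M k).map Complex.ofReal with hP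
    have e1 : (z • (1 : Matrix (Fin n) (Fin n) ℂ) - P).det = P.charpoly.eval z := by
      rw [Matrix.eval_charpoly, Matrix.smul_one_eq_diagonal]; rfl
    rw [e1, (IsAlgClosed.splits P.charpoly).eval_eq_prod_roots_of_monic P.charpoly_monic]
    have hcard : P.charpoly.roots.card = n := by
      rw [← (IsAlgClosed.splits P.charpoly).natDegree_eq_card_roots,
        Matrix.charpoly_natDegree_eq_dim, Fintype.card_fin]
    have hroots : ∀ w ∈ P.charpoly.roots, ‖w‖ < 1 := by
      intro w hw
      apply hs
      rw [mem_spec_iff_det]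
      have := (Polynomial.mem_roots'.1 hw).2
      rw [Polynomial.IsRoot, Matrix.eval_charpoly] at this
      rw [Matrix.smul_one_eq_diagonal]
      exact this
    clear e1
    have key : ∀ m : Multiset ℂ, (∀ w ∈ m, ‖w‖ < 1) →
        (‖z‖ - 1) ^ (m.card) ≤ ‖(m.map fun w => z - w).prod‖ := by
      intro m
      induction m using Multiset.induction_on with
      | empty => intro _; simp
      | cons w m ih =>
        intro hw
        rw [Multiset.card_cons, Multiset.map_cons, Multiset.prod_cons, norm_mul, pow_succ']
        have h1 := ih fun x hx => hw x (Multiset.mem_cons_of_mem hx)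
        have h2 := hw w (Multiset.mem_cons_self w m)
        have h3 : ‖z‖ - 1 ≤ ‖z - w‖ := by
          have := norm_sub_norm_le z w
          linarith
        exact mul_le_mul h3 h1 (pow_nonneg (by linarith) _) (norm_nonneg _)
    have := key _ hroots
    rwa [hcard] at this
  have hc : Continuous (fun K : Matrix (Fin n) (Fin n) ℝ =>
      ‖(z • (1 : Matrix (Fin n) (Fin n) ℂ) - K.map Complex.ofReal).det‖) := by
    apply Continuous.norm
    apply Continuous.matrix_det
    apply Continuous.sub continuous_const
    exact continuous_id.matrix_map Complex.continuous_ofReal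
  have h1 := (hc.tendsto N).comp hlim
  have h2 := ge_of_tendsto' h1 hlow
  rw [hdet, norm_zero] at h2
  have : 0 < (‖z‖ - 1) ^ n := pow_pos (by linarith) _
  linarith

theorem psd_symm {n : ℕ} {X : Matrix (Fin n) (Fin n) ℝ} (h : X.PosSemidef) : Xᵀ = X := by
  have := h.isHermitian
  rwa [Matrix.IsHermitian, Matrix.conjTranspose_eq_transpose_of_trivial] at this

theorem psd_nonneg {n : ℕ} {X : Matrix (Fin n) (Fin n) ℝ} (h : X.PosSemidef) (v : Fin n → ℝ) :
    0 ≤ v ⬝ᵥ X *ᵥ v := by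
  simpa using h.dotProduct_mulVec_nonneg v

theorem psd_mk {n : ℕ} {X : Matrix (Fin n) (Fin n) ℝ} (hs : Xᵀ = X)
    (h : ∀ v : Fin n → ℝ, 0 ≤ v ⬝ᵥ X *ᵥ v) : X.PosSemidef := by
  refine Matrix.PosSemidef.of_dotProduct_mulVec_nonneg ?_ fun v => by simpa using h v
  rwa [Matrix.IsHermitian, Matrix.conjTranspose_eq_transpose_of_trivial]

theorem quad_conj {p n : ℕ} (X : Matrix (Fin p) (Fin p) ℝ) (M : Matrix (Fin p) (Fin n) ℝ)
    (v : Fin n → ℝ) : v ⬝ᵥ (Mᵀ * X * M) *ᵥ v = (M *ᵥ v) ⬝ᵥ X *ᵥ (M *ᵥ v) := by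
  rw [Matrix.mul_assoc, ← Matrix.mulVec_mulVec, Matrix.dotProduct_mulVec, Matrix.vecMul_transpose,
    ← Matrix.mulVec_mulVec]

theorem quad_gram {p n : ℕ} (M : Matrix (Fin p) (Fin n) ℝ)
    (v : Fin n → ℝ) : v ⬝ᵥ (Mᵀ * M) *ᵥ v = (M *ᵥ v) ⬝ᵥ (M *ᵥ v) := by
  rw [← Matrix.mulVec_mulVec, Matrix.dotProduct_mulVec, Matrix.vecMul_transpose]

theorem psd_conj {p n : ℕ} {X : Matrix (Fin p) (Fin p) ℝ} (hX : X.PosSemidef)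
    (M : Matrix (Fin p) (Fin n) ℝ) : (Mᵀ * X * M).PosSemidef := by
  apply psd_mk
  · simp [Matrix.transpose_mul, psd_symm hX, Matrix.mul_assoc]
  · intro v
    rw [quad_conj]
    exact psd_nonneg hX _

theorem psd_gram {p n : ℕ} (M : Matrix (Fin p) (Fin n) ℝ) : (Mᵀ * M).PosSemidef := by
  apply psd_mk
  · simp [Matrix.transpose_mul]
  · intro v
    rw [quad_gram]
    exact Finset.sum_nonneg fun i _ => mul_self_nonneg _

/-- The homogeneous Stein equation has only the trivial solution. -/
theorem stein_zero {n : ℕ} {M L P : Matrix (Fin n) (Fin n) ℝ} (hM : SchurStable M)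
    (hL : SchurStable L) (h : P = Lᵀ * P * M) : P = 0 := by
  have hk : ∀ k : ℕ, P = (L ^ k)ᵀ * P * M ^ k := by
    intro k
    induction k with
    | zero => simp
    | succ k ih =>
      rw [pow_succ' M, pow_succ' L, Matrix.transpose_mul]
      calc P = (L ^ k)ᵀ * P * M ^ k := ih
        _ = (L ^ k)ᵀ * (Lᵀ * P * M) * M ^ k := by rw [← h]
        _ = _ := by simp only [Matrix.mul_assoc]
  have h1 := schur_pow_tendsto M hM
  have h2 := schur_pow_tendsto L hL
  have hc : Continuous (fun p : Matrix (Fin n) (Fin n) ℝ × Matrix (Fin n) (Fin n) ℝ =>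
      p.1ᵀ * P * p.2) := by fun_prop
  have h3 := (hc.tendsto (0, 0)).comp (h2.prodMk_nhds h1)
  have h4 : Tendsto (fun _ : ℕ => P) atTop (𝓝 ((0 : Matrix (Fin n) (Fin n) ℝ)ᵀ * P * 0)) :=
    h3.congr fun k => (hk k).symm
  have := tendsto_nhds_unique h4 tendsto_const_nhds
  rw [← this]
  simp

theorem psd_of_stein {n : ℕ} {M P N : Matrix (Fin n) (Fin n) ℝ} (hM : SchurStable M)
    (hs : Pᵀ = P) (hN : N.PosSemidef) (h : P = Mᵀ * P * M + N) : P.PosSemidef := by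
  apply psd_mk hs
  intro v
  have step : ∀ w : Fin n → ℝ, (M *ᵥ w) ⬝ᵥ P *ᵥ (M *ᵥ w) ≤ w ⬝ᵥ P *ᵥ w := by
    intro w
    have h1 : w ⬝ᵥ P *ᵥ w = w ⬝ᵥ (Mᵀ * P * M + N) *ᵥ w := by rw [← h]
    rw [Matrix.add_mulVec, dotProduct_add, quad_conj] at h1
    have := psd_nonneg hN w
    linarith
  have hk : ∀ k : ℕ, (M ^ k *ᵥ v) ⬝ᵥ P *ᵥ (M ^ k *ᵥ v) ≤ v ⬝ᵥ P *ᵥ v := by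
    intro k
    induction k with
    | zero => simp
    | succ k ih =>
      rw [pow_succ', ← Matrix.mulVec_mulVec]
      exact (step _).trans ih
  have hc : Continuous (fun K : Matrix (Fin n) (Fin n) ℝ => (K *ᵥ v) ⬝ᵥ P *ᵥ (K *ᵥ v)) := by
    fun_prop
  have h3 := (hc.tendsto 0).comp (schur_pow_tendsto M hM)
  have := le_of_tendsto' h3 hk
  simpa using this

theorem stein_exists {n : ℕ} {M N : Matrix (Fin n) (Fin n) ℝ} (hM : SchurStable M)
    (hN : N.PosSemidef) : ∃ P : Matrix (Fin n) (Fin n) ℝ, P.PosSemidef ∧ P = Mᵀ * P * M + N := by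
  let T : Matrix (Fin n) (Fin n) ℝ →ₗ[ℝ] Matrix (Fin n) (Fin n) ℝ :=
    { toFun := fun P => P - Mᵀ * P * M
      map_add' := by intro P P'; simp only [Matrix.mul_add, Matrix.add_mul]; abel
      map_smul' := by intro c P; simp [smul_sub] }
  have hinj : Function.Injective T := by
    rw [← LinearMap.ker_eq_bot, LinearMap.ker_eq_bot']
    intro P hP
    have : P - Mᵀ * P * M = 0 := hP
    exact stein_zero hM hM (sub_eq_zero.1 this)
  obtain ⟨P, hP⟩ := LinearMap.injective_iff_surjective.1 hinj N
  have hP' : P - Mᵀ * P * M = N := hP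
  have hP1 : P = Mᵀ * P * M + N := by rw [← hP']; abel
  have hs : Pᵀ = P := by
    apply hinj
    change Pᵀ - Mᵀ * Pᵀ * M = P - Mᵀ * P * M
    rw [hP', ← psd_symm hN, ← hP']
    simp [Matrix.transpose_mul, Matrix.mul_assoc]
  exact ⟨P, psd_of_stein hM hs hN hP1, hP1⟩

theorem complete_square {n m q : ℕ} {A' X : Matrix (Fin n) (Fin n) ℝ}
    {B : Matrix (Fin n) (Fin m) ℝ} {C' : Matrix (Fin q) (Fin n) ℝ} {D : Matrix (Fin q) (Fin m) ℝ}
    (hX : Xᵀ = X) (hZ : Bᵀ * X * A' + Dᵀ * C' = 0) (E : Matrix (Fin m) (Fin n) ℝ) :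
    (A' + B * E)ᵀ * X * (A' + B * E) + (C' + D * E)ᵀ * (C' + D * E) =
      A'ᵀ * X * A' + C'ᵀ * C' + Eᵀ * (Dᵀ * D + Bᵀ * X * B) * E := by
  have h1 : Eᵀ * (Bᵀ * X * A' + Dᵀ * C') = 0 := by rw [hZ, Matrix.mul_zero]
  have h2 := congrArg Matrix.transpose h1
  simp only [Matrix.transpose_mul, Matrix.transpose_add, Matrix.transpose_transpose, hX,
    Matrix.mul_add, Matrix.add_mul, Matrix.mul_assoc, Matrix.transpose_zero] at h1 h2 ⊢
  have h3 : A'ᵀ * (X * (A')) + A'ᵀ * (X * (B * E)) + (Eᵀ * (Bᵀ * (X * A')) + Eᵀ * (Bᵀ * (X * (B * E)))) +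
     (C'ᵀ * C' + C'ᵀ * (D * E) + (Eᵀ * (Dᵀ * C') + Eᵀ * (Dᵀ * (D * E)))) =
     A'ᵀ * (X * A') + C'ᵀ * C' + (Eᵀ * (Dᵀ * (D * E)) + Eᵀ * (Bᵀ * (X * (B * E)))) +
     (Eᵀ * (Bᵀ * (X * A')) + Eᵀ * (Dᵀ * C')) + (A'ᵀ * (X * (B * E)) + C'ᵀ * (D * E)) := by abel
  rw [h1, h2, add_zero, add_zero] at h3
  rw [← h3]
  abel

variable {n m q : ℕ} {A X : Matrix (Fin n) (Fin n) ℝ}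
    {B : Matrix (Fin n) (Fin m) ℝ} {C : Matrix (Fin q) (Fin n) ℝ} {D : Matrix (Fin q) (Fin m) ℝ}

theorem W_posDef (hR : (Dᵀ * D).PosDef) (hX : X.PosSemidef) :
    (Dᵀ * D + Bᵀ * X * B).PosDef :=
  hR.add_posSemidef (psd_conj hX B)

theorem gain_stationary (hW : IsUnit (Dᵀ * D + Bᵀ * X * B)) :
    Bᵀ * X * (A + B * -(gain A B (Cᵀ * D) (Dᵀ * D) X)) +
      Dᵀ * (C + D * -(gain A B (Cᵀ * D) (Dᵀ * D) X)) = 0 := by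
  have hW' := (Matrix.isUnit_iff_isUnit_det _).1 hW
  have h : (Dᵀ * D + Bᵀ * X * B) * gain A B (Cᵀ * D) (Dᵀ * D) X = Bᵀ * X * A + (Cᵀ * D)ᵀ := by
    rw [gain, Matrix.mul_nonsing_inv_cancel_left _ _ hW']
  generalize gain A B (Cᵀ * D) (Dᵀ * D) X = K at h
  simp only [Matrix.transpose_mul, Matrix.transpose_transpose, Matrix.add_mul, Matrix.mul_add,
    Matrix.mul_neg, Matrix.mul_assoc] at h ⊢
  rw [← sub_eq_zero] at h
  rw [← neg_eq_zero, ← h]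
  abel

/-- The closed-loop (Lyapunov) form of the Riccati operator. -/
theorem riccati_closed (hX : Xᵀ = X) (hW : IsUnit (Dᵀ * D + Bᵀ * X * B)) :
    (A + B * -(gain A B (Cᵀ * D) (Dᵀ * D) X))ᵀ * X * (A + B * -(gain A B (Cᵀ * D) (Dᵀ * D) X)) +
      (C + D * -(gain A B (Cᵀ * D) (Dᵀ * D) X))ᵀ * (C + D * -(gain A B (Cᵀ * D) (Dᵀ * D) X)) =
    Aᵀ * X * A + Cᵀ * C - (Aᵀ * X * B + Cᵀ * D) * (Dᵀ * D + Bᵀ * X * B)⁻¹ *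
      (Aᵀ * X * B + Cᵀ * D)ᵀ := by
  have hZ := gain_stationary (A := A) (C := C) hW
  have hg : (Dᵀ * D + Bᵀ * X * B)⁻¹ * (Aᵀ * X * B + Cᵀ * D)ᵀ = gain A B (Cᵀ * D) (Dᵀ * D) X := by
    simp [gain, Matrix.transpose_mul, hX, Matrix.mul_assoc]
  rw [Matrix.mul_assoc (Aᵀ * X * B + Cᵀ * D), hg]
  generalize gain A B (Cᵀ * D) (Dᵀ * D) X = K at hZ
  have h1 : Kᵀ * (Bᵀ * X * (A + B * -K) + Dᵀ * (C + D * -K)) = 0 := by rw [hZ, Matrix.mul_zero]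
  rw [← sub_zero (Aᵀ * X * A + Cᵀ * C - (Aᵀ * X * B + Cᵀ * D) * K), ← h1]
  simp only [Matrix.transpose_mul, Matrix.transpose_add, Matrix.transpose_neg, Matrix.add_mul,
    Matrix.mul_add, Matrix.mul_neg, Matrix.neg_mul, Matrix.mul_assoc]
  abel

theorem kleinman_stable (hR : (Dᵀ * D).PosDef) (F : Matrix (Fin m) (Fin n) ℝ)
    (hF : SchurStable (A + B * F)) (hX : X.PosSemidef)
    (hc : X = (A + B * F)ᵀ * X * (A + B * F) + (C + D * F)ᵀ * (C + D * F)) :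
    SchurStable (A + B * -(gain A B (Cᵀ * D) (Dᵀ * D) X)) ∧
    ∃ N : Matrix (Fin n) (Fin n) ℝ, N.PosSemidef ∧
      X = (A + B * -(gain A B (Cᵀ * D) (Dᵀ * D) X))ᵀ * X *
          (A + B * -(gain A B (Cᵀ * D) (Dᵀ * D) X)) +
        (C + D * -(gain A B (Cᵀ * D) (Dᵀ * D) X))ᵀ *
          (C + D * -(gain A B (Cᵀ * D) (Dᵀ * D) X)) + N := by
  have hW := W_posDef (B := B) hR hX
  have hZ := gain_stationary (A := A) (C := C) hW.isUnit
  set F' := -(gain A B (Cᵀ * D) (Dᵀ * D) X) with hF'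
  have hsq := complete_square (psd_symm hX) hZ (F - F')
  have e1 : A + B * F' + B * (F - F') = A + B * F := by rw [Matrix.mul_sub]; abel
  have e2 : C + D * F' + D * (F - F') = C + D * F := by rw [Matrix.mul_sub]; abel
  rw [e1, e2, ← hc] at hsq
  refine ⟨?_, _, psd_conj hW.posSemidef (F - F'), hsq⟩
  apply schur_of_pairs
  intro s t a b hab ha hb
  by_contra hcon
  push Not at hcon
  have hq : ∀ v : Fin n → ℝ, v ⬝ᵥ X *ᵥ v = ((A + B * F') *ᵥ v) ⬝ᵥ X *ᵥ ((A + B * F') *ᵥ v) +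
      ((C + D * F') *ᵥ v) ⬝ᵥ ((C + D * F') *ᵥ v) +
      ((F - F') *ᵥ v) ⬝ᵥ (Dᵀ * D + Bᵀ * X * B) *ᵥ ((F - F') *ᵥ v) := by
    intro v
    have h := congrArg (fun Y : Matrix (Fin n) (Fin n) ℝ => v ⬝ᵥ Y *ᵥ v) hsq
    simp only [Matrix.add_mulVec _ _ v, dotProduct_add] at h
    rw [quad_conj, quad_gram, quad_conj] at h
    simpa only [Matrix.add_mulVec] using h
  have hqa := hq a
  have hqb := hq b
  rw [ha] at hqa
  rw [hb] at hqb
  have hsum : (s • a - t • b) ⬝ᵥ X *ᵥ (s • a - t • b) + (t • a + s • b) ⬝ᵥ X *ᵥ (t • a + s • b) =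
      (s ^ 2 + t ^ 2) * (a ⬝ᵥ X *ᵥ a + b ⬝ᵥ X *ᵥ b) := by
    simp only [Matrix.mulVec_sub, Matrix.mulVec_add, Matrix.mulVec_smul, dotProduct_sub,
      sub_dotProduct, dotProduct_add, add_dotProduct, smul_dotProduct, dotProduct_smul,
      smul_eq_mul]
    ring
  have g1 : 0 ≤ ((C + D * F') *ᵥ a) ⬝ᵥ ((C + D * F') *ᵥ a) :=
    Finset.sum_nonneg fun i _ => mul_self_nonneg _
  have g2 : 0 ≤ ((C + D * F') *ᵥ b) ⬝ᵥ ((C + D * F') *ᵥ b) :=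
    Finset.sum_nonneg fun i _ => mul_self_nonneg _
  have g3 := psd_nonneg hW.posSemidef ((F - F') *ᵥ a)
  have g4 := psd_nonneg hW.posSemidef ((F - F') *ᵥ b)
  have g5 := psd_nonneg hX a
  have g6 := psd_nonneg hX b
  have g7 : 0 ≤ (s ^ 2 + t ^ 2 - 1) * (a ⬝ᵥ X *ᵥ a + b ⬝ᵥ X *ᵥ b) :=
    mul_nonneg (by linarith) (by linarith)
  have hzero : ∀ w : Fin m → ℝ, w ⬝ᵥ (Dᵀ * D + Bᵀ * X * B) *ᵥ w ≤ 0 → w = 0 := by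
    intro w hw
    by_contra h0
    have := hW.dotProduct_mulVec_pos h0
    simp only [star_trivial] at this
    linarith
  have za := hzero ((F - F') *ᵥ a) (by nlinarith)
  have zb := hzero ((F - F') *ᵥ b) (by nlinarith)
  have e3 : A + B * F = A + B * F' + B * (F - F') := e1.symm
  have := pairs_of_schur _ hF s t a b hab
    (by rw [e3, Matrix.add_mulVec, ← Matrix.mulVec_mulVec, za, Matrix.mulVec_zero, add_zero, ha])
    (by rw [e3, Matrix.add_mulVec, ← Matrix.mulVec_mulVec, zb, Matrix.mulVec_zero, add_zero, hb])
  linarith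

/-- One step of the Newton (Kleinman) iteration. -/
theorem kleinman_step (hR : (Dᵀ * D).PosDef) (F : Matrix (Fin m) (Fin n) ℝ)
    (hF : SchurStable (A + B * F)) (hX : X.PosSemidef)
    (hc : X = (A + B * F)ᵀ * X * (A + B * F) + (C + D * F)ᵀ * (C + D * F)) :
    ∃ (F' : Matrix (Fin m) (Fin n) ℝ) (X' : Matrix (Fin n) (Fin n) ℝ),
      SchurStable (A + B * F') ∧ X'.PosSemidef ∧
      X' = (A + B * F')ᵀ * X' * (A + B * F') + (C + D * F')ᵀ * (C + D * F') ∧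
      F' = -(gain A B (Cᵀ * D) (Dᵀ * D) X) ∧ (X - X').PosSemidef := by
  obtain ⟨hst, N, hN, hXN⟩ := kleinman_stable hR F hF hX hc
  set F' := -(gain A B (Cᵀ * D) (Dᵀ * D) X) with hF'
  obtain ⟨X', hX', hX'c⟩ := stein_exists hst (psd_gram (C + D * F'))
  refine ⟨F', X', hst, hX', hX'c, rfl, ?_⟩
  refine psd_of_stein (N := N) hst ?_ hN ?_
  · rw [Matrix.transpose_sub, psd_symm hX, psd_symm hX']
  · have : X - X' = ((A + B * F')ᵀ * X * (A + B * F') + (C + D * F')ᵀ * (C + D * F') + N) -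
        ((A + B * F')ᵀ * X' * (A + B * F') + (C + D * F')ᵀ * (C + D * F')) := by
      rw [← hXN, ← hX'c]
    rw [Matrix.mul_sub, Matrix.sub_mul]
    refine this.trans ?_
    abel

/-- A decreasing sequence of positive semidefinite matrices converges. -/
theorem psd_seq_tendsto {n : ℕ} (X : ℕ → Matrix (Fin n) (Fin n) ℝ) (hX : ∀ k, (X k).PosSemidef)
    (hdec : ∀ k, (X k - X (k + 1)).PosSemidef) :
    ∃ L : Matrix (Fin n) (Fin n) ℝ, L.PosSemidef ∧ Tendsto X atTop (𝓝 L) := by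
  have hq : ∀ v : Fin n → ℝ, ∃ l : ℝ, Tendsto (fun k => v ⬝ᵥ X k *ᵥ v) atTop (𝓝 l) := by
    intro v
    refine ⟨_, tendsto_atTop_ciInf (antitone_nat_of_succ_le fun k => ?_)
      ⟨0, by rintro _ ⟨k, rfl⟩; exact psd_nonneg (hX k) v⟩⟩
    have := psd_nonneg (hdec k) v
    rw [Matrix.sub_mulVec, dotProduct_sub] at this
    linarith
  choose l hl using hq
  have hent : ∀ i j, ∃ c : ℝ, Tendsto (fun k => X k i j) atTop (𝓝 c) := by
    intro i j
    refine ⟨_, ((((hl (Pi.single i 1 + Pi.single j 1)).sub (hl (Pi.single i 1))).sub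
      (hl (Pi.single j 1))).div_const 2).congr fun k => ?_⟩
    have hs : X k j i = X k i j := congrFun (congrFun (psd_symm (hX k)) i) j
    simp only [Matrix.mulVec_add, dotProduct_add, add_dotProduct, Matrix.mulVec_single_one,
      single_one_dotProduct, Matrix.col_apply, hs]
    ring
  choose L hL using hent
  have hlim : Tendsto X atTop (𝓝 (Matrix.of L)) := by
    refine tendsto_pi_nhds.2 fun i => tendsto_pi_nhds.2 fun j => ?_
    exact hL i j
  refine ⟨Matrix.of L, psd_mk ?_ fun v => ?_, hlim⟩
  · have hc : Continuous (fun K : Matrix (Fin n) (Fin n) ℝ => Kᵀ) := by fun_prop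
    have h1 := (hc.tendsto (Matrix.of L)).comp hlim
    exact tendsto_nhds_unique (h1.congr fun k => psd_symm (hX k)) hlim
  · have hc : Continuous (fun K : Matrix (Fin n) (Fin n) ℝ => v ⬝ᵥ K *ᵥ v) := by fun_prop
    have h1 := (hc.tendsto (Matrix.of L)).comp hlim
    exact ge_of_tendsto' h1 fun k => psd_nonneg (hX k) v

theorem gain_tendsto {X : ℕ → Matrix (Fin n) (Fin n) ℝ} {L : Matrix (Fin n) (Fin n) ℝ}
    (S : Matrix (Fin n) (Fin m) ℝ) (R : Matrix (Fin m) (Fin m) ℝ)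
    (hX : Tendsto X atTop (𝓝 L)) (hW : IsUnit (R + Bᵀ * L * B)) :
    Tendsto (fun k => gain A B S R (X k)) atTop (𝓝 (gain A B S R L)) := by
  have hdet : (R + Bᵀ * L * B).det ≠ 0 :=
    ((Matrix.isUnit_iff_isUnit_det _).1 hW).ne_zero
  have c1 : Continuous (fun K : Matrix (Fin n) (Fin n) ℝ => R + Bᵀ * K * B) := by fun_prop
  have c2 : Continuous (fun K : Matrix (Fin n) (Fin n) ℝ => Bᵀ * K * A + Sᵀ) := by fun_prop
  have c3 : ContinuousAt (fun K : Matrix (Fin n) (Fin n) ℝ => (R + Bᵀ * K * B)⁻¹) L := by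
    simp only [Matrix.inv_def, Ring.inverse_eq_inv']
    exact (c1.matrix_det.continuousAt.inv₀ hdet).smul c1.matrix_adjugate.continuousAt
  have hc : Continuous (fun p : Matrix (Fin m) (Fin m) ℝ × Matrix (Fin m) (Fin n) ℝ =>
      p.1 * p.2) := by fun_prop
  have c4 : ContinuousAt (fun K : Matrix (Fin n) (Fin n) ℝ => gain A B S R K) L :=
    hc.continuousAt.comp (x := L) (f := fun K : Matrix (Fin n) (Fin n) ℝ =>
      ((R + Bᵀ * K * B)⁻¹, Bᵀ * K * A + Sᵀ)) (c3.prodMk c2.continuousAt)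
  exact Tendsto.comp c4 hX

theorem exists_theta (s t : ℝ) (h : s ^ 2 + t ^ 2 = 1) :
    ∃ θ ∈ Set.Icc (0 : ℝ) (2 * Real.pi), Complex.exp (θ * Complex.I) = ⟨s, t⟩ := by
  set z : ℂ := ⟨s, t⟩ with hz
  have hn : ‖z‖ = 1 := by
    have : ‖z‖ ^ 2 = 1 := by
      rw [Complex.sq_norm, Complex.normSq_apply]
      simp only [hz]
      linarith
    nlinarith [norm_nonneg z]
  have he : Complex.exp (z.arg * Complex.I) = z := by
    have := Complex.norm_mul_exp_arg_mul_I z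
    rwa [hn, Complex.ofReal_one, one_mul] at this
  have h1 := Complex.arg_le_pi z
  have h2 := Complex.neg_pi_lt_arg z
  have hp := Real.pi_pos
  by_cases h0 : 0 ≤ z.arg
  · exact ⟨z.arg, ⟨h0, by linarith⟩, he⟩
  · push Not at h0
    refine ⟨z.arg + 2 * Real.pi, ⟨by linarith, by linarith⟩, ?_⟩
    push_cast
    rw [add_mul, Complex.exp_add, he, Complex.exp_two_pi_mul_I, mul_one]

theorem no_unit_eig
    (hrank : ∀ θ : ℝ, θ ∈ Set.Icc (0 : ℝ) (2 * Real.pi) →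
      (Matrix.fromBlocks
        (A.map Complex.ofReal - Complex.exp (θ * Complex.I) • (1 : Matrix (Fin n) (Fin n) ℂ))
        (B.map Complex.ofReal) (C.map Complex.ofReal) (D.map Complex.ofReal)).rank = n + m)
    (F : Matrix (Fin m) (Fin n) ℝ) (s t : ℝ) (hst : s ^ 2 + t ^ 2 = 1) (a b : Fin n → ℝ)
    (ha : (A + B * F) *ᵥ a = s • a - t • b) (hb : (A + B * F) *ᵥ b = t • a + s • b)
    (ca : (C + D * F) *ᵥ a = 0) (cb : (C + D * F) *ᵥ b = 0) : a = 0 ∧ b = 0 := by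
  obtain ⟨θ, hθ, he⟩ := exists_theta s t hst
  have hr := hrank θ hθ
  rw [he] at hr
  set z : ℂ := ⟨s, t⟩ with hz
  set M := Matrix.fromBlocks
        (A.map Complex.ofReal - z • (1 : Matrix (Fin n) (Fin n) ℂ))
        (B.map Complex.ofReal) (C.map Complex.ofReal) (D.map Complex.ofReal) with hM
  have hker : LinearMap.ker M.mulVecLin = ⊥ := by
    have h1 := LinearMap.finrank_range_add_finrank_ker M.mulVecLin
    have h2 : Module.finrank ℂ (LinearMap.range M.mulVecLin) = n + m := hr
    rw [h2] at h1
    simp only [Module.finrank_fintype_fun_eq_card, Fintype.card_sum, Fintype.card_fin] at h1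
    exact Submodule.finrank_eq_zero.1 (by omega)
  have hmul : ∀ {p r : ℕ} (N : Matrix (Fin p) (Fin r) ℝ) (x y : Fin r → ℝ),
      (N.map Complex.ofReal) *ᵥ (fun i => (⟨x i, y i⟩ : ℂ)) =
        fun i => ⟨(N *ᵥ x) i, (N *ᵥ y) i⟩ := by
    intro p r N x y
    funext i
    apply Complex.ext <;> simp [Matrix.mulVec, dotProduct]
  rw [Matrix.add_mulVec, ← Matrix.mulVec_mulVec] at ha hb ca cb
  have hv : M *ᵥ (Sum.elim (fun i => (⟨a i, b i⟩ : ℂ))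
      (fun i => (⟨(F *ᵥ a) i, (F *ᵥ b) i⟩ : ℂ))) = 0 := by
    rw [hM, Matrix.fromBlocks_mulVec]
    simp only [Sum.elim_comp_inl, Sum.elim_comp_inr]
    rw [Matrix.sub_mulVec, Matrix.smul_mulVec, Matrix.one_mulVec, hmul, hmul, hmul, hmul]
    funext i
    rcases i with i | i
    · have h1 := congrFun ha i
      have h2 := congrFun hb i
      simp only [Pi.add_apply, Pi.sub_apply, Pi.smul_apply, smul_eq_mul] at h1 h2
      apply Complex.ext
      · simp [hz, -Matrix.mulVec_mulVec]; linarith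
      · simp [hz, -Matrix.mulVec_mulVec]; linarith
    · have h1 := congrFun ca i
      have h2 := congrFun cb i
      simp only [Pi.add_apply, Pi.zero_apply] at h1 h2
      apply Complex.ext
      · simp [-Matrix.mulVec_mulVec]; linarith
      · simp [-Matrix.mulVec_mulVec]; linarith
  have h0 := (LinearMap.ker_eq_bot'.1 hker) _ hv
  constructor
  · funext i
    exact congrArg Complex.re (congrFun h0 (Sum.inl i))
  · funext i
    exact congrArg Complex.im (congrFun h0 (Sum.inl i))

theorem dot_self_zero {p : ℕ} (w : Fin p → ℝ) (h : w ⬝ᵥ w ≤ 0) : w = 0 := by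
  have h0 : 0 ≤ w ⬝ᵥ w := Finset.sum_nonneg fun i _ => mul_self_nonneg _
  exact dotProduct_self_eq_zero.1 (le_antisymm h h0)

theorem stabilizing_unique (A : Matrix (Fin n) (Fin n) ℝ) (B : Matrix (Fin n) (Fin m) ℝ)
    (Q : Matrix (Fin n) (Fin n) ℝ) (S : Matrix (Fin n) (Fin m) ℝ)
    (R : Matrix (Fin m) (Fin m) ℝ) (hRs : Rᵀ = R) (hQs : Qᵀ = Q) (X Y : Matrix (Fin n) (Fin n) ℝ)
    (hX : IsStabilizingSolution A B Q S R X) (hY : IsStabilizingSolution A B Q S R Y) : Y = X := by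
  have facts : ∀ Z : Matrix (Fin n) (Fin n) ℝ, IsDARESolution A B Q S R Z →
      Z = Aᵀ * Z * (A - B * gain A B S R Z) + Q - S * gain A B S R Z ∧
      R * gain A B S R Z = Bᵀ * Z * (A - B * gain A B S R Z) + Sᵀ := by
    rintro Z ⟨hs, hu, he⟩
    have hs' : Zᵀ = Z := hs
    have hW' := (Matrix.isUnit_iff_isUnit_det _).1 hu
    have h : (R + Bᵀ * Z * B) * gain A B S R Z = Bᵀ * Z * A + Sᵀ := by
      rw [gain, Matrix.mul_nonsing_inv_cancel_left _ _ hW']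
    have hg : (R + Bᵀ * Z * B)⁻¹ * (Aᵀ * Z * B + S)ᵀ = gain A B S R Z := by
      simp [gain, Matrix.transpose_mul, hs', Matrix.mul_assoc]
    rw [Matrix.mul_assoc (Aᵀ * Z * B + S), hg] at he
    generalize gain A B S R Z = K at *
    constructor
    · refine he.trans ?_
      simp only [Matrix.mul_sub, Matrix.add_mul, Matrix.mul_assoc]
      abel
    · rw [Matrix.mul_sub, sub_add_eq_add_sub, ← h]
      simp only [Matrix.add_mul, Matrix.mul_assoc]
      abel
  obtain ⟨x1, x2⟩ := facts X hX.1
  obtain ⟨y1, y2⟩ := facts Y hY.1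
  have hXs := hX.2
  have hYs := hY.2
  have sY : Yᵀ = Y := hY.1.1
  generalize gain A B S R X = K at *
  generalize gain A B S R Y = H at *
  set U := A - B * K with hU
  set V := A - B * H with hV
  have y1' := congrArg Matrix.transpose y1
  have y2' := congrArg Matrix.transpose y2
  simp only [Matrix.transpose_mul, Matrix.transpose_sub, Matrix.transpose_add,
    Matrix.transpose_transpose, sY, hRs, hQs] at y1' y2'
  have p1 : Vᵀ * X * U = Aᵀ * X * U - Hᵀ * (Bᵀ * X * U) := by
    rw [hV]
    simp only [Matrix.transpose_sub, Matrix.transpose_mul, Matrix.sub_mul, Matrix.mul_assoc]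
  have p2 : Vᵀ * Y * U = Vᵀ * (Y * A) - (Vᵀ * (Y * B)) * K := by
    rw [hU]
    simp only [Matrix.mul_sub, Matrix.mul_assoc]
  have x1a : Aᵀ * X * U = X - Q + S * K := by
    have : Aᵀ * X * U = (Aᵀ * X * U + Q - S * K) - Q + S * K := by abel
    rw [← x1] at this
    exact this
  have x2a : Bᵀ * X * U = R * K - Sᵀ := by rw [x2]; abel
  have y1a : Vᵀ * (Y * A) = Y - Q + Hᵀ * Sᵀ := by
    have : Vᵀ * (Y * A) = (Vᵀ * (Y * A) + Q - Hᵀ * Sᵀ) - Q + Hᵀ * Sᵀ := by abel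
    rw [← y1'] at this
    exact this
  have y2a : Vᵀ * (Y * B) = Hᵀ * R - S := by rw [y2']; abel
  have key : X - Y = Vᵀ * (X - Y) * U := by
    rw [Matrix.mul_sub Vᵀ X Y, Matrix.sub_mul (Vᵀ * X) (Vᵀ * Y) U, p1, p2, x1a, x2a, y1a, y2a]
    simp only [Matrix.mul_sub, Matrix.sub_mul, Matrix.mul_assoc]
    abel
  have := stein_zero hXs hYs key
  exact (sub_eq_zero.1 this).symm

theorem exists_stabilizing (hR : (Dᵀ * D).PosDef)
    (hstab : ∃ F : Matrix (Fin m) (Fin n) ℝ, SchurStable (A + B * F))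
    (hrank : ∀ θ : ℝ, θ ∈ Set.Icc (0 : ℝ) (2 * Real.pi) →
      (Matrix.fromBlocks
        (A.map Complex.ofReal - Complex.exp (θ * Complex.I) • (1 : Matrix (Fin n) (Fin n) ℂ))
        (B.map Complex.ofReal) (C.map Complex.ofReal) (D.map Complex.ofReal)).rank = n + m) :
    ∃ X : Matrix (Fin n) (Fin n) ℝ,
      IsStabilizingSolution A B (Cᵀ * C) (Cᵀ * D) (Dᵀ * D) X ∧ X.PosSemidef := by
  let T := {p : Matrix (Fin m) (Fin n) ℝ × Matrix (Fin n) (Fin n) ℝ //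
    SchurStable (A + B * p.1) ∧ p.2.PosSemidef ∧
      p.2 = (A + B * p.1)ᵀ * p.2 * (A + B * p.1) + (C + D * p.1)ᵀ * (C + D * p.1)}
  have hstep : ∀ p : T, ∃ p' : T, p'.1.1 = -(gain A B (Cᵀ * D) (Dᵀ * D) p.1.2) ∧
      (p.1.2 - p'.1.2).PosSemidef := by
    rintro ⟨⟨F, X⟩, hF, hX, hc⟩
    obtain ⟨F', X', h1, h2, h3, h4, h5⟩ := kleinman_step hR F hF hX hc
    exact ⟨⟨⟨F', X'⟩, h1, h2, h3⟩, h4, h5⟩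
  choose next hnext using hstep
  obtain ⟨F0, hF0⟩ := hstab
  obtain ⟨X0, hX0, hX0c⟩ := stein_exists hF0 (psd_gram (C + D * F0))
  let p : ℕ → T := fun k => Nat.rec ⟨⟨F0, X0⟩, hF0, hX0, hX0c⟩ (fun _ r => next r) k
  have hp : ∀ k, p (k + 1) = next (p k) := fun k => rfl
  obtain ⟨X, hX, hlim⟩ := psd_seq_tendsto (fun k => (p k).1.2) (fun k => (p k).2.2.1)
    (fun k => by simp only [hp]; exact (hnext (p k)).2)
  have hW := (W_posDef (B := B) hR hX).isUnit
  have hgl := (gain_tendsto (A := A) (Cᵀ * D) (Dᵀ * D) hlim hW).neg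
  set F := -(gain A B (Cᵀ * D) (Dᵀ * D) X) with hF
  have hFl : Tendsto (fun k => (p (k + 1)).1.1) atTop (𝓝 F) :=
    hgl.congr fun k => by rw [hp, (hnext (p k)).1]
  have hXl : Tendsto (fun k => (p (k + 1)).1.2) atTop (𝓝 X) :=
    (tendsto_add_atTop_iff_nat (f := fun k => (p k).1.2) 1).2 hlim
  have hcl : X = (A + B * F)ᵀ * X * (A + B * F) + (C + D * F)ᵀ * (C + D * F) := by
    have hc : Continuous (fun r : Matrix (Fin m) (Fin n) ℝ × Matrix (Fin n) (Fin n) ℝ =>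
      (A + B * r.1)ᵀ * r.2 * (A + B * r.1) + (C + D * r.1)ᵀ * (C + D * r.1)) := by fun_prop
    have h1 := (hc.tendsto (F, X)).comp (hFl.prodMk_nhds hXl)
    exact tendsto_nhds_unique hXl (h1.congr fun k => (p (k + 1)).2.2.2.symm)
  have hAl : Tendsto (fun k => A + B * (p (k + 1)).1.1) atTop (𝓝 (A + B * F)) :=
    ((show Continuous (fun K : Matrix (Fin m) (Fin n) ℝ => A + B * K) by fun_prop).tendsto F).comp
      hFl
  refine ⟨X, ⟨⟨psd_symm hX, hW, ?_⟩, ?_⟩, hX⟩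
  · exact hcl.trans (riccati_closed (psd_symm hX) hW)
  · have e : A - B * gain A B (Cᵀ * D) (Dᵀ * D) X = A + B * F := by
      rw [hF, Matrix.mul_neg, sub_eq_add_neg]
    rw [e]
    apply schur_of_pairs
    intro s t a b hab ha hb
    have hle := schur_limit _ _ (fun k => (p (k + 1)).2.1) hAl s t a b hab ha hb
    rcases lt_or_eq_of_le hle with h | h
    · exact h
    exfalso
    have hq : ∀ v : Fin n → ℝ, v ⬝ᵥ X *ᵥ v = ((A + B * F) *ᵥ v) ⬝ᵥ X *ᵥ ((A + B * F) *ᵥ v) +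
        ((C + D * F) *ᵥ v) ⬝ᵥ ((C + D * F) *ᵥ v) := by
      intro v
      have h := congrArg (fun Y : Matrix (Fin n) (Fin n) ℝ => v ⬝ᵥ Y *ᵥ v) hcl
      simp only [Matrix.add_mulVec _ _ v, dotProduct_add] at h
      rw [quad_conj, quad_gram] at h
      simpa only [Matrix.add_mulVec] using h
    have hqa := hq a
    have hqb := hq b
    rw [ha] at hqa
    rw [hb] at hqb
    have hsum : (s • a - t • b) ⬝ᵥ X *ᵥ (s • a - t • b) +
        (t • a + s • b) ⬝ᵥ X *ᵥ (t • a + s • b) =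
        (s ^ 2 + t ^ 2) * (a ⬝ᵥ X *ᵥ a + b ⬝ᵥ X *ᵥ b) := by
      simp only [Matrix.mulVec_sub, Matrix.mulVec_add, Matrix.mulVec_smul, dotProduct_sub,
        sub_dotProduct, dotProduct_add, add_dotProduct, smul_dotProduct, dotProduct_smul,
        smul_eq_mul]
      ring
    rw [h, one_mul] at hsum
    have g1 : 0 ≤ ((C + D * F) *ᵥ a) ⬝ᵥ ((C + D * F) *ᵥ a) :=
      Finset.sum_nonneg fun i _ => mul_self_nonneg _
    have g2 : 0 ≤ ((C + D * F) *ᵥ b) ⬝ᵥ ((C + D * F) *ᵥ b) :=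
      Finset.sum_nonneg fun i _ => mul_self_nonneg _
    obtain ⟨h1, h2⟩ := no_unit_eig hrank F s t h a b ha hb (dot_self_zero _ (by linarith))
      (dot_self_zero _ (by linarith))
    rcases hab with h3 | h3
    · exact h3 h1
    · exact h3 h2

end helpers

/-- Under positive definiteness of `R`, stabilizability of `(A,B)`,
nonsingularity of `A - B R⁻¹ Sᵀ`, and the full-column-rank frequency condition on
`[[A - e^{iθ} I, B], [C, D]]` where `Q = CᵀC`, `S = CᵀD`, `R = DᵀD`, there exists a
unique stabilizing solution of the DARE, and this solution is positive semidefinite. -/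
theorem dare_exists_unique_stabilizing_solution {n m q : ℕ}
    (A : Matrix (Fin n) (Fin n) ℝ) (B : Matrix (Fin n) (Fin m) ℝ)
    (Q : Matrix (Fin n) (Fin n) ℝ) (S : Matrix (Fin n) (Fin m) ℝ)
    (R : Matrix (Fin m) (Fin m) ℝ) (hQsymm : Q.IsSymm) (hRsymm : R.IsSymm)
    (hRpd : R.PosDef)
    (hstab : ∃ F : Matrix (Fin m) (Fin n) ℝ, SchurStable (A + B * F))
    (hns : IsUnit (A - B * R⁻¹ * Sᵀ))
    (C : Matrix (Fin q) (Fin n) ℝ) (D : Matrix (Fin q) (Fin m) ℝ)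
    (hQ : Q = Cᵀ * C) (hS : S = Cᵀ * D) (hR : R = Dᵀ * D)
    (hrank : ∀ θ : ℝ, θ ∈ Set.Icc (0 : ℝ) (2 * Real.pi) →
      (Matrix.fromBlocks
        (A.map Complex.ofReal - Complex.exp (θ * Complex.I) • (1 : Matrix (Fin n) (Fin n) ℂ))
        (B.map Complex.ofReal) (C.map Complex.ofReal) (D.map Complex.ofReal)).rank = n + m) :
    ∃ X : Matrix (Fin n) (Fin n) ℝ, IsStabilizingSolution A B Q S R X ∧ X.PosSemidef ∧
      ∀ Y : Matrix (Fin n) (Fin n) ℝ, IsStabilizingSolution A B Q S R Y → Y = X := by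
  subst hQ hS hR
  obtain ⟨X, hX, hpsd⟩ := exists_stabilizing hRpd hstab hrank
  exact ⟨X, hX, hpsd, fun Y hY => stabilizing_unique A B _ _ _ hRsymm hQsymm X Y hX hY⟩
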